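/- arXiv:2109.00447 — 2 statements merged into one kernel-verified Lean document; each statement's English description precedes it below -/
import Mathlib

section
/- Let S be an invertible real symmetric 3×3 matrix and let E be one of the matrices ±diag(1,1,1), ±diag(1,1,−1). Let ⟨·,·⟩ be the symmetric bilinear form on T*𝔥₃ whose matrix in the basis (e₁,…,e₆) is the block-diagonal matrix diag(S, E). Then the scalar curvature of the associated metric equals τ = − tr(S·E) / (2 det S). -/
open Matrix

noncomputable section

/-- The Lie bracket of `T*𝔥₃` in the basis `(e₁,…,e₆)`:
`[e₁,e₂]=e₆`, `[e₁,e₃]=−e₅`, `[e₂,e₃]=e₄`. -/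
def bra (x y : Fin 6 → ℝ) : Fin 6 → ℝ :=
  ![0, 0, 0, x 1 * y 2 - x 2 * y 1, x 2 * y 0 - x 0 * y 2, x 0 * y 1 - x 1 * y 0]

/-- The bilinear form associated to the matrix `A`. -/
def gm (A : Matrix (Fin 6) (Fin 6) ℝ) (x y : Fin 6 → ℝ) : ℝ := x ⬝ᵥ A.mulVec y

/-- Curvature `R(x,y)z = ∇ₓ∇_y z − ∇_y∇ₓ z − ∇_{[x,y]} z` of a connection `D`. -/
def curv (D : (Fin 6 → ℝ) → (Fin 6 → ℝ) → (Fin 6 → ℝ)) (x y z : Fin 6 → ℝ) :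
    Fin 6 → ℝ :=
  D x (D y z) - D y (D x z) - D (bra x y) z

/-- Ricci tensor `ρ(x,y) = tr(z ↦ R(z,x)y)`, computed in the standard basis. -/
def ricci (D : (Fin 6 → ℝ) → (Fin 6 → ℝ) → (Fin 6 → ℝ)) (x y : Fin 6 → ℝ) : ℝ :=
  ∑ i : Fin 6, curv D (Pi.single i 1) x y i

/-! Split `ℝ⁶ = ℝ³ × ℝ³` into the horizontal part `⟨e₁, e₂, e₃⟩` and the center `⟨e₄, e₅, e₆⟩`, so
that the bracket is `[(u, a), (v, b)] = (0, u ⨯₃ v)`. By invariance of the triple product, Koszul's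
formula is solved by `∇_{(u,a)} (v,b) = ½ (S⁻¹ (u ⨯₃ E b + v ⨯₃ E a), u ⨯₃ v)`. Writing `[u]` for
the matrix of `u ⨯₃ ·`, its curvature gives
* `ρ (u, 0) (v, 0) = ½ tr ([u] S⁻¹ [v] E)`,
* `ρ (0, a) (0, b) = -¼ tr (S⁻¹ [E a] S⁻¹ [E b]) = ½ det S⁻¹ (S E a · E b)`,
the last equality because `M [v] Mᵀ = [adj(M)ᵀ v]`. Contracting with `S⁻¹` and `E⁻¹`, the horizontal
part contributes `-tr (S E) / det S` and the central part `tr (S E) / (2 det S)`.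
-/

section CrossMatrix

variable {R : Type*} [CommRing R]

/-- The matrix of the linear map `w ↦ v ⨯₃ w`. -/
def crossMatrix (v : Fin 3 → R) : Matrix (Fin 3) (Fin 3) R :=
  LinearMap.toMatrix' (crossProduct v)

theorem crossMatrix_eq (v : Fin 3 → R) :
    crossMatrix v = !![0, -v 2, v 1; v 2, 0, -v 0; -v 1, v 0, 0] := by
  ext i j
  fin_cases i <;> fin_cases j <;> simp [crossMatrix, LinearMap.toMatrix'_apply, cross_apply]

theorem crossMatrix_mulVec (v w : Fin 3 → R) : crossMatrix v *ᵥ w = v ⨯₃ w :=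
  LinearMap.toMatrix'_mulVec _ _

theorem crossMatrix_smul (c : R) (v : Fin 3 → R) : crossMatrix (c • v) = c • crossMatrix v := by
  simp only [crossMatrix, map_smul]

theorem transpose_crossMatrix (v : Fin 3 → R) : (crossMatrix v)ᵀ = -crossMatrix v := by
  simp only [crossMatrix_eq]
  ext i j
  fin_cases i <;> fin_cases j <;> simp

theorem trace_crossMatrix_mul_crossMatrix (v w : Fin 3 → R) :
    (crossMatrix v * crossMatrix w).trace = -2 * (v ⬝ᵥ w) := by
  simp only [crossMatrix_eq, trace_fin_three, mul_apply, vec3_dotProduct, Fin.sum_univ_three]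
  simp only [of_apply, cons_val', cons_val_zero, cons_val_one, cons_val_fin_one, cons_val,
    mul_zero, zero_add, add_zero, neg_mul, mul_neg]
  ring

theorem trace_mul_crossMatrix_of_isSymm {M : Matrix (Fin 3) (Fin 3) R} (hM : M.IsSymm)
    (v : Fin 3 → R) : (M * crossMatrix v).trace = 0 := by
  simp only [crossMatrix_eq, trace_fin_three, mul_apply, Fin.sum_univ_three]
  simp only [of_apply, cons_val', cons_val_zero, cons_val_one, cons_val_fin_one, cons_val,
    mul_zero, zero_add, add_zero, mul_neg, hM.apply 0 1, hM.apply 0 2, hM.apply 1 2]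
  ring

theorem mul_crossMatrix_mul_transpose (M : Matrix (Fin 3) (Fin 3) R) (v : Fin 3 → R) :
    M * crossMatrix v * Mᵀ = crossMatrix (M.adjugateᵀ *ᵥ v) := by
  simp only [crossMatrix_eq, adjugate_fin_three]
  ext i j
  simp only [mul_apply, transpose_apply, mulVec, dotProduct, Fin.sum_univ_three]
  fin_cases i <;> fin_cases j <;> simp <;> ring

theorem sum_smul_crossMatrix_mul_mul_crossMatrix (M : Matrix (Fin 3) (Fin 3) R) :
    ∑ i, ∑ j, M i j • (crossMatrix (Pi.single i 1) * M * crossMatrix (Pi.single j 1)) =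
      (-2 : R) • M.adjugateᵀ := by
  simp only [crossMatrix_eq, adjugate_fin_three]
  ext a b
  simp only [Matrix.sum_apply, Matrix.smul_apply, Matrix.mul_apply]
  simp only [Fin.sum_univ_three]
  fin_cases a <;> fin_cases b <;> simp <;> ring

end CrossMatrix

section Trace

variable {n R : Type*} [Fintype n] [DecidableEq n] [CommRing R]

theorem sum_mulVec_single_apply (A : Matrix n n R) :
    ∑ i, (A *ᵥ Pi.single i 1) i = A.trace := by
  simp [trace]

theorem trace_eq_sum_inv_mul_dotProduct {G : Matrix n n R} (hG : IsUnit G.det)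
    (A : Matrix n n R) :
    A.trace = ∑ i, ∑ j, G⁻¹ j i * ((A *ᵥ Pi.single i 1) ⬝ᵥ G *ᵥ Pi.single j 1) := by
  have entry (i j : n) : (A *ᵥ Pi.single i 1) ⬝ᵥ G *ᵥ Pi.single j 1 = (Aᵀ * G) i j := by
    simp [mul_apply, dotProduct]
  calc A.trace = (Aᵀ * G * G⁻¹).trace := by
        rw [mul_nonsing_inv_cancel_right _ _ hG, trace_transpose]
    _ = _ := by
        simp only [entry, trace, diag_apply, mul_apply (M := Aᵀ * G), mul_comm]

theorem adjugate_inv {G : Matrix n n R} (hG : IsUnit G.det) :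
    G⁻¹.adjugate = G⁻¹.det • G :=
  calc G⁻¹.adjugate = G⁻¹.adjugate * (G⁻¹ * G) := by rw [nonsing_inv_mul _ hG, mul_one]
    _ = G⁻¹.det • G := by rw [← mul_assoc, adjugate_mul, smul_mul, one_mul]

end Trace

section BlockMetric

/-- The splitting of the indices of `e₁, …, e₆` into horizontal ones (left) and central ones
(right). -/
abbrev blockEquiv : Fin 3 ⊕ Fin 3 ≃ Fin 6 := finSumFinEquiv

/-- The identification of `ℝ³ × ℝ³` with `T*𝔥₃`: the first factor is the horizontal part
`⟨e₁, e₂, e₃⟩`, the second one is the center `⟨e₄, e₅, e₆⟩`. -/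
def ofBlocks : ((Fin 3 → ℝ) × (Fin 3 → ℝ)) ≃ₗ[ℝ] (Fin 6 → ℝ) :=
  (LinearEquiv.sumArrowLequivProdArrow (Fin 3) (Fin 3) ℝ ℝ).symm ≪≫ₗ
    LinearEquiv.funCongrLeft ℝ ℝ blockEquiv.symm

/-- The Gram matrix `diag(S, E)` of the metric on `T*𝔥₃`. -/
def blockMetric (S E : Matrix (Fin 3) (Fin 3) ℝ) : Matrix (Fin 6) (Fin 6) ℝ :=
  reindex blockEquiv blockEquiv (fromBlocks S 0 0 E)

/-- The Levi-Civita connection of the metric `diag(S, E)` on `T*𝔥₃`, in the closed form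
obtained by solving Koszul's formula blockwise; it is meaningful for symmetric invertible `S`. -/
def leviCivita (S E : Matrix (Fin 3) (Fin 3) ℝ) (x y : Fin 6 → ℝ) : Fin 6 → ℝ :=
  let (u, a) := ofBlocks.symm x
  let (v, b) := ofBlocks.symm y
  ofBlocks ((2⁻¹ : ℝ) • S⁻¹ *ᵥ (u ⨯₃ (E *ᵥ b) + v ⨯₃ (E *ᵥ a)), (2⁻¹ : ℝ) • u ⨯₃ v)

variable {S E : Matrix (Fin 3) (Fin 3) ℝ}

theorem ofBlocks_single_inl (i : Fin 3) :
    ofBlocks (Pi.single i 1, 0) = Pi.single (blockEquiv (Sum.inl i)) 1 := by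
  ext j
  fin_cases i <;> fin_cases j <;> rfl

theorem ofBlocks_single_inr (i : Fin 3) :
    ofBlocks (0, Pi.single i 1) = Pi.single (blockEquiv (Sum.inr i)) 1 := by
  ext j
  fin_cases i <;> fin_cases j <;> rfl

theorem bra_ofBlocks (x y : (Fin 3 → ℝ) × (Fin 3 → ℝ)) :
    bra (ofBlocks x) (ofBlocks y) = ofBlocks (0, x.1 ⨯₃ y.1) := by
  ext i
  fin_cases i <;> rfl

theorem gm_blockMetric (x y : (Fin 3 → ℝ) × (Fin 3 → ℝ)) :
    gm (blockMetric S E) (ofBlocks x) (ofBlocks y) = x.1 ⬝ᵥ S *ᵥ y.1 + x.2 ⬝ᵥ E *ᵥ y.2 := by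
  have ofBlocks_eq (z : (Fin 3 → ℝ) × (Fin 3 → ℝ)) :
      ofBlocks z = Sum.elim z.1 z.2 ∘ blockEquiv.symm := rfl
  rw [gm, blockMetric, reindex_apply, ofBlocks_eq, ofBlocks_eq, submatrix_mulVec_equiv,
    comp_equiv_symm_dotProduct]
  simp [Function.comp_assoc, fromBlocks_mulVec]

theorem eq_of_forall_gm_eq {G : Matrix (Fin 6) (Fin 6) ℝ} (hG : IsUnit G.det) {x y : Fin 6 → ℝ}
    (h : ∀ z, gm G x z = gm G y z) : x = y := by
  refine sub_eq_zero.mp ((nondegenerate_of_det_ne_zero hG.ne_zero).eq_zero_of_ortho fun z => ?_)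
  rw [sub_dotProduct, sub_eq_zero]
  exact h z

theorem isUnit_det_blockMetric (hS : IsUnit S.det) (hE : IsUnit E.det) :
    IsUnit (blockMetric S E).det := by
  rw [blockMetric, det_reindex_self, det_fromBlocks_zero₂₁]
  exact hS.mul hE

theorem inv_blockMetric (hS : IsUnit S.det) (hE : IsUnit E.det) :
    (blockMetric S E)⁻¹ = blockMetric S⁻¹ E⁻¹ := by
  have hSE : IsUnit S ↔ IsUnit E := by simp only [isUnit_iff_isUnit_det, hS, hE]
  rw [blockMetric, inv_reindex, inv_fromBlocks_zero₂₁_of_isUnit_iff _ _ _ hSE]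
  simp [blockMetric]

theorem trace_eq_sum_inv_mul_gm_blockMetric (hS : IsUnit S.det) (hE : IsUnit E.det)
    (A : Matrix (Fin 6) (Fin 6) ℝ) :
    A.trace =
      (∑ i, ∑ j, S⁻¹ j i * gm (blockMetric S E) (A *ᵥ ofBlocks (Pi.single i 1, 0))
        (ofBlocks (Pi.single j 1, 0))) +
      ∑ i, ∑ j, E⁻¹ j i * gm (blockMetric S E) (A *ᵥ ofBlocks (0, Pi.single i 1))
        (ofBlocks (0, Pi.single j 1)) := by
  rw [trace_eq_sum_inv_mul_dotProduct (isUnit_det_blockMetric hS hE), inv_blockMetric hS hE]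
  simp only [← blockEquiv.sum_comp, Fintype.sum_sum_type,
    ofBlocks_single_inl, ofBlocks_single_inr, gm]
  simp [blockMetric]

theorem leviCivita_ofBlocks (u a v b : Fin 3 → ℝ) :
    leviCivita S E (ofBlocks (u, a)) (ofBlocks (v, b)) =
      ofBlocks ((2⁻¹ : ℝ) • S⁻¹ *ᵥ (u ⨯₃ (E *ᵥ b) + v ⨯₃ (E *ᵥ a)), (2⁻¹ : ℝ) • u ⨯₃ v) := by
  simp only [leviCivita, LinearEquiv.symm_apply_apply]

theorem two_mul_gm_leviCivita (hS : S.IsSymm) (hSdet : IsUnit S.det) (x y z : Fin 6 → ℝ) :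
    2 * gm (blockMetric S E) (leviCivita S E x y) z =
      gm (blockMetric S E) (bra x y) z - gm (blockMetric S E) (bra y z) x +
        gm (blockMetric S E) (bra z x) y := by
  obtain ⟨⟨u, a⟩, rfl⟩ := ofBlocks.surjective x
  obtain ⟨⟨v, b⟩, rfl⟩ := ofBlocks.surjective y
  obtain ⟨⟨w, c⟩, rfl⟩ := ofBlocks.surjective z
  have inv_mulVec_dotProduct (m : Fin 3 → ℝ) : S⁻¹ *ᵥ m ⬝ᵥ S *ᵥ w = m ⬝ᵥ w := by
    rw [dotProduct_mulVec, ← mulVec_transpose, hS.eq, mulVec_mulVec, mul_nonsing_inv _ hSdet,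
      one_mulVec]
  have cyclic (p q r : Fin 3 → ℝ) : (p ⨯₃ q) ⬝ᵥ r = (q ⨯₃ r) ⬝ᵥ p := by
    rw [dotProduct_comm, triple_product_permutation, dotProduct_comm]
  have left_term : (w ⨯₃ u) ⬝ᵥ E *ᵥ b = (u ⨯₃ (E *ᵥ b)) ⬝ᵥ w := cyclic _ _ _
  have right_term : (v ⨯₃ w) ⬝ᵥ E *ᵥ a = -((v ⨯₃ (E *ᵥ a)) ⬝ᵥ w) := by
    rw [← cross_anticomm, neg_dotProduct, cyclic]
  simp only [leviCivita_ofBlocks, bra_ofBlocks, gm_blockMetric, zero_dotProduct, zero_add,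
    smul_dotProduct, inv_mulVec_dotProduct, add_dotProduct, left_term, right_term, smul_eq_mul]
  ring

theorem eq_leviCivita_of_koszul (hS : S.IsSymm) (hSdet : IsUnit S.det) (hEdet : IsUnit E.det)
    {D : (Fin 6 → ℝ) → (Fin 6 → ℝ) → (Fin 6 → ℝ)}
    (hkoszul : ∀ x y z, 2 * gm (blockMetric S E) (D x y) z =
      gm (blockMetric S E) (bra x y) z - gm (blockMetric S E) (bra y z) x +
        gm (blockMetric S E) (bra z x) y) :
    D = leviCivita S E := by
  funext x y
  refine eq_of_forall_gm_eq (isUnit_det_blockMetric hSdet hEdet) fun z => ?_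
  exact mul_left_cancel₀ two_ne_zero
    ((hkoszul x y z).trans (two_mul_gm_leviCivita hS hSdet x y z).symm)

theorem ricci_eq_trace_add_trace {D : (Fin 6 → ℝ) → (Fin 6 → ℝ) → (Fin 6 → ℝ)}
    {x y : Fin 6 → ℝ} {A B : Matrix (Fin 3) (Fin 3) ℝ}
    (hA : ∀ w, (ofBlocks.symm (curv D (ofBlocks (w, 0)) x y)).1 = A *ᵥ w)
    (hB : ∀ c, (ofBlocks.symm (curv D (ofBlocks (0, c)) x y)).2 = B *ᵥ c) :
    ricci D x y = A.trace + B.trace := by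
  simp only [← sum_mulVec_single_apply, ← hA, ← hB, ricci, ← blockEquiv.sum_comp,
    Fintype.sum_sum_type, ← ofBlocks_single_inl, ← ofBlocks_single_inr]
  rfl

theorem curv_leviCivita_horizontal (u v w : Fin 3 → ℝ) :
    curv (leviCivita S E) (ofBlocks (w, 0)) (ofBlocks (u, 0)) (ofBlocks (v, 0)) =
      ofBlocks (((1 / 4 : ℝ) • (S⁻¹ * crossMatrix u * E * crossMatrix v) +
        (1 / 2 : ℝ) • (S⁻¹ * crossMatrix v * E * crossMatrix u) -
        (1 / 4 : ℝ) • (S⁻¹ * crossMatrix (E *ᵥ (u ⨯₃ v)))) *ᵥ w, 0) := by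
  rw [curv, bra_ofBlocks]
  simp only [leviCivita_ofBlocks, ← map_sub, add_mulVec, sub_mulVec, smul_mulVec,
    ← mulVec_mulVec, crossMatrix_mulVec, ← cross_anticomm _ w]
  congr 1
  simp only [mulVec_smul, map_smul, LinearMap.smul_apply, mulVec_zero, map_zero, add_zero,
    smul_zero, LinearMap.zero_apply, mulVec_neg, smul_neg, neg_zero, map_neg, Prod.mk_sub_mk,
    sub_neg_eq_add, sub_self, zero_add, Prod.mk.injEq, and_true]
  module

theorem curv_leviCivita_central_horizontal (u v c : Fin 3 → ℝ) :
    curv (leviCivita S E) (ofBlocks (0, c)) (ofBlocks (u, 0)) (ofBlocks (v, 0)) =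
      ofBlocks (0, (-(1 / 4 : ℝ) • (crossMatrix u * S⁻¹ * crossMatrix v * E)) *ᵥ c) := by
  rw [curv, bra_ofBlocks]
  simp only [leviCivita_ofBlocks, ← map_sub, smul_mulVec, ← mulVec_mulVec, crossMatrix_mulVec]
  congr 1
  simp only [map_zero, LinearMap.zero_apply, mulVec_zero, add_zero, smul_zero, zero_add, map_smul,
    Prod.mk_sub_mk, sub_self, zero_sub, sub_zero, Prod.mk.injEq, true_and]
  module

theorem curv_leviCivita_horizontal_central (a b w : Fin 3 → ℝ) :
    curv (leviCivita S E) (ofBlocks (w, 0)) (ofBlocks (0, a)) (ofBlocks (0, b)) =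
      ofBlocks ((-(1 / 4 : ℝ) •
        (S⁻¹ * crossMatrix (E *ᵥ a) * S⁻¹ * crossMatrix (E *ᵥ b))) *ᵥ w, 0) := by
  rw [curv, bra_ofBlocks]
  simp only [leviCivita_ofBlocks, ← map_sub, smul_mulVec,
    ← mulVec_mulVec, crossMatrix_mulVec, ← cross_anticomm _ w, ← cross_anticomm (E *ᵥ a)]
  congr 1
  simp only [map_zero, LinearMap.zero_apply, smul_zero, mulVec_zero, neg_zero, add_zero,
    mulVec_neg, smul_neg, map_neg, map_smul, neg_neg, zero_add, mulVec_smul, Prod.mk_sub_mk,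
    zero_sub, sub_self, sub_zero, Prod.mk.injEq, and_true]
  module

theorem curv_leviCivita_central (a b c : Fin 3 → ℝ) :
    curv (leviCivita S E) (ofBlocks (0, c)) (ofBlocks (0, a)) (ofBlocks (0, b)) = 0 := by
  rw [curv, bra_ofBlocks]
  simp [leviCivita_ofBlocks]

theorem ricci_leviCivita_horizontal (hS : S.IsSymm) (hE : E.IsSymm) (u v : Fin 3 → ℝ) :
    ricci (leviCivita S E) (ofBlocks (u, 0)) (ofBlocks (v, 0)) =
      (1 / 2 : ℝ) * (crossMatrix u * S⁻¹ * crossMatrix v * E).trace := by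
  have trace_last : (S⁻¹ * crossMatrix (E *ᵥ (u ⨯₃ v))).trace = 0 :=
    trace_mul_crossMatrix_of_isSymm hS.inv _
  have trace_second : (S⁻¹ * crossMatrix v * E * crossMatrix u).trace =
      (crossMatrix u * S⁻¹ * crossMatrix v * E).trace := by
    rw [trace_mul_comm]
    simp only [mul_assoc]
  have trace_first : (S⁻¹ * crossMatrix u * E * crossMatrix v).trace =
      (crossMatrix u * S⁻¹ * crossMatrix v * E).trace := by
    rw [← trace_second, ← trace_transpose]
    simp only [transpose_mul, transpose_crossMatrix, hS.inv.eq, hE.eq, neg_mul, mul_neg, neg_neg,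
      mul_assoc]
    rw [trace_mul_comm S⁻¹]
    simp only [mul_assoc]
  rw [ricci_eq_trace_add_trace (fun w => by
      rw [curv_leviCivita_horizontal, LinearEquiv.symm_apply_apply]) (fun c => by
      rw [curv_leviCivita_central_horizontal, LinearEquiv.symm_apply_apply]),
    trace_sub, trace_add]
  simp only [trace_smul, trace_first, trace_second, trace_last, smul_eq_mul]
  ring

theorem ricci_leviCivita_central (hS : S.IsSymm) (hSdet : IsUnit S.det) (a b : Fin 3 → ℝ) :
    ricci (leviCivita S E) (ofBlocks (0, a)) (ofBlocks (0, b)) =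
      (1 / 2 : ℝ) * S⁻¹.det * ((S *ᵥ E *ᵥ a) ⬝ᵥ E *ᵥ b) := by
  have conj : S⁻¹ * crossMatrix (E *ᵥ a) * S⁻¹ = S⁻¹.det • crossMatrix (S *ᵥ E *ᵥ a) :=
    calc S⁻¹ * crossMatrix (E *ᵥ a) * S⁻¹ = S⁻¹ * crossMatrix (E *ᵥ a) * S⁻¹ᵀ := by
          rw [hS.inv.eq]
      _ = S⁻¹.det • crossMatrix (S *ᵥ E *ᵥ a) := by
          rw [mul_crossMatrix_mul_transpose, adjugate_inv hSdet, transpose_smul, hS.eq, smul_mulVec,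
            crossMatrix_smul]
  rw [ricci_eq_trace_add_trace (B := 0) (fun w => by
      rw [curv_leviCivita_horizontal_central, LinearEquiv.symm_apply_apply]) (fun c => by
      rw [curv_leviCivita_central, map_zero, zero_mulVec, Prod.snd_zero]),
    conj, smul_mul, trace_smul, trace_smul, trace_crossMatrix_mul_crossMatrix]
  simp only [trace_zero, smul_eq_mul]
  ring

theorem sum_inv_mul_ricci_leviCivita_horizontal (hS : S.IsSymm) (hSdet : IsUnit S.det)
    (hE : E.IsSymm) :
    ∑ i, ∑ j, S⁻¹ j i * ricci (leviCivita S E) (ofBlocks (Pi.single i 1, 0))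
      (ofBlocks (Pi.single j 1, 0)) = -S⁻¹.det * (S * E).trace := by
  calc _ = (1 / 2 : ℝ) * ((∑ i, ∑ j, S⁻¹ i j •
          (crossMatrix (Pi.single i 1) * S⁻¹ * crossMatrix (Pi.single j 1))) * E).trace := by
        simp only [ricci_leviCivita_horizontal hS hE, hS.inv.apply, Finset.sum_mul, trace_sum,
          Finset.mul_sum, smul_mul, trace_smul, smul_eq_mul, mul_left_comm]
    _ = -S⁻¹.det * (S * E).trace := by
        rw [sum_smul_crossMatrix_mul_mul_crossMatrix, adjugate_inv hSdet, transpose_smul, hS.eq]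
        simp only [smul_mul, trace_smul, smul_eq_mul]
        ring

theorem sum_inv_mul_ricci_leviCivita_central (hS : S.IsSymm) (hSdet : IsUnit S.det)
    (hEdet : IsUnit E.det) :
    ∑ i, ∑ j, E⁻¹ j i * ricci (leviCivita S E) (ofBlocks (0, Pi.single i 1))
      (ofBlocks (0, Pi.single j 1)) = (1 / 2 : ℝ) * S⁻¹.det * (S * E).trace := by
  rw [trace_eq_sum_inv_mul_dotProduct hEdet (S * E)]
  simp only [ricci_leviCivita_central hS hSdet, mulVec_mulVec, Finset.mul_sum, mul_left_comm]

end BlockMetric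

theorem isSymm_and_isUnit_det_of_pm_diagonal {E : Matrix (Fin 3) (Fin 3) ℝ}
    (hE : E = 1 ∨ E = -1 ∨ E = Matrix.diagonal ![1, 1, -1] ∨
      E = -Matrix.diagonal ![1, 1, -1]) : E.IsSymm ∧ IsUnit E.det := by
  have isUnit_det_neg {F : Matrix (Fin 3) (Fin 3) ℝ} (hF : IsUnit F.det) : IsUnit (-F).det := by
    simpa [det_neg] using hF
  have isUnit_det : IsUnit (diagonal ![1, 1, -1] : Matrix (Fin 3) (Fin 3) ℝ).det := by
    simp [Fin.prod_univ_three]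
  rcases hE with rfl | rfl | rfl | rfl
  · exact ⟨isSymm_one, by simp⟩
  · exact ⟨isSymm_one.neg, isUnit_det_neg (by simp)⟩
  · exact ⟨isSymm_diagonal _, isUnit_det⟩
  · exact ⟨(isSymm_diagonal _).neg, isUnit_det_neg isUnit_det⟩

theorem stmt_13_general (S E : Matrix (Fin 3) (Fin 3) ℝ) (hSsym : S.IsSymm)
    (hSdet : IsUnit S.det) (hEsym : E.IsSymm) (hEdet : IsUnit E.det)
    (Smat : Matrix (Fin 6) (Fin 6) ℝ)
    (hSmat : Smat = Matrix.reindex finSumFinEquiv finSumFinEquiv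
      (Matrix.fromBlocks S 0 0 E))
    (D : (Fin 6 → ℝ) → (Fin 6 → ℝ) → (Fin 6 → ℝ))
    (hkoszul : ∀ x y z, 2 * gm Smat (D x y) z =
      gm Smat (bra x y) z - gm Smat (bra y z) x + gm Smat (bra z x) y)
    (Ric : Matrix (Fin 6) (Fin 6) ℝ)
    (hRic : ∀ x y, gm Smat (Ric.mulVec x) y = ricci D x y) :
    Ric.trace = -(S * E).trace / (2 * S.det) := by
  obtain rfl : Smat = blockMetric S E := hSmat
  obtain rfl : D = leviCivita S E := eq_leviCivita_of_koszul hSsym hSdet hEdet hkoszul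
  calc Ric.trace = -S⁻¹.det * (S * E).trace + (1 / 2 : ℝ) * S⁻¹.det * (S * E).trace := by
        rw [trace_eq_sum_inv_mul_gm_blockMetric hSdet hEdet]
        simp only [hRic, sum_inv_mul_ricci_leviCivita_horizontal hSsym hSdet hEsym,
          sum_inv_mul_ricci_leviCivita_central hSsym hSdet hEdet]
    _ = -(S * E).trace / (2 * S.det) := by
        rw [det_nonsing_inv, Ring.inverse_eq_inv']
        ring

/-- For the metric `diag(S, E)` on `T*𝔥₃` with `S` invertible symmetric and
`E = ±diag(1,1,1)` or `±diag(1,1,−1)`, the scalar curvature (the trace of the Ricci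
operator) equals `−tr(S·E)/(2·det S)`. -/
theorem stmt_13 (S E : Matrix (Fin 3) (Fin 3) ℝ) (hSsym : S.IsSymm)
    (hSdet : IsUnit S.det)
    (hE : E = 1 ∨ E = -1 ∨ E = Matrix.diagonal ![1, 1, -1] ∨
      E = -Matrix.diagonal ![1, 1, -1])
    (Smat : Matrix (Fin 6) (Fin 6) ℝ)
    (hSmat : Smat = Matrix.reindex finSumFinEquiv finSumFinEquiv
      (Matrix.fromBlocks S 0 0 E))
    (D : (Fin 6 → ℝ) → (Fin 6 → ℝ) → (Fin 6 → ℝ))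
    (hkoszul : ∀ x y z, 2 * gm Smat (D x y) z =
      gm Smat (bra x y) z - gm Smat (bra y z) x + gm Smat (bra z x) y)
    (Ric : Matrix (Fin 6) (Fin 6) ℝ)
    (hRic : ∀ x y, gm Smat (Ric.mulVec x) y = ricci D x y) :
    Ric.trace = -(S * E).trace / (2 * S.det) := by
  obtain ⟨hEsym, hEdet⟩ := isSymm_and_isUnit_det_of_pm_diagonal hE
  exact stmt_13_general S E hSsym hSdet hEsym hEdet Smat hSmat D hkoszul Ric hRic
end
end

section
/- Let ε ∈ {+1, −1}, let E be one of the matrices ε·diag(0,1,1) or ε·diag(0,1,−1), let M be the 3×3 matrix whose only nonzero entry is a 1 in position (1,1), and let S be either diag(0, s₂₂, s₃₃) with s₂₂s₃₃ ≠ 0 or [[0,0,0],[0, s₂₂, |s₂₂|/2],[0, |s₂₂|/2, 0]] with s₂₂ ≠ 0 (the latter only when E = ±diag(0,1,−1)). Let ⟨·,·⟩ be the symmetric bilinear form on T*𝔥₃ with matrix [[S, M],[Mᵀ, E]] in the basis (e₁,…,e₆), assumed nondegenerate. Then this metric is a pp-wave: e₄ is a parallel null vector (∇_y e₄ = 0 for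 all y, and ⟨e₄,e₄⟩ = 0), and R(u,w) = 0 for all u, w with ⟨u, e₄⟩ = ⟨w, e₄⟩ = 0. -/
open Matrix

noncomputable section

/-- The matrix `M` with single nonzero entry `1` in position `(1,1)`. -/
def Mw : Matrix (Fin 3) (Fin 3) ℝ := !![1, 0, 0; 0, 0, 0; 0, 0, 0]

/-! Let `v` be a central vector orthogonal to all brackets. The Koszul formula gives `∇ v = 0`.
If moreover brackets of vectors in `v^⊥` are multiples of `v`, then for `u, w, z ∈ v^⊥` the
right-hand side of the Koszul formula vanishes, so `∇_u w` is orthogonal to `v^⊥`, hence a multiple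
of the parallel vector `v`. Therefore `R(u, w)` kills `v^⊥`. Being skew-adjoint, it has its image in
`(v^⊥)^⊥ = Kv`, and `⟨R(u, w)z, z⟩ = 0` forces `R(u, w)z = 0` when `⟨z, v⟩ ≠ 0`.
For `T*𝔥₃` and `v = e₄`, all brackets of `e₂, …, e₆` are multiples of `[e₂, e₃] = e₄`. -/

section LeviCivita

variable {K V : Type*} [Field K] [AddCommGroup V] [Module K V]

/-- `D` is the Levi-Civita connection, for the metric `B`, of the algebra with bracket `L`: it
satisfies the Koszul formula. The bracket is a bilinear map, to be assumed alternating where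
needed. -/
def IsLeviCivita (L : V →ₗ[K] V →ₗ[K] V) (B : LinearMap.BilinForm K V) (D : V → V → V) : Prop :=
  ∀ x y z, 2 * B (D x y) z = B (L x y) z - B (L y z) x + B (L z x) y

/-- The curvature `R(x,y)z = ∇ₓ∇_y z − ∇_y∇ₓ z − ∇_{[x,y]} z` of a connection `D` on the algebra
with bracket `L`. -/
def curvature (L : V →ₗ[K] V →ₗ[K] V) (D : V → V → V) (x y z : V) : V :=
  D x (D y z) - D y (D x z) - D (L x y) z

lemma mem_span_singleton_of_forall_orthogonal {B : LinearMap.BilinForm K V} (hB : B.Nondegenerate)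
    {v x : V} (hx : ∀ z, B v z = 0 → B x z = 0) : x ∈ K ∙ v := by
  have hker : ⨅ _ : Unit, LinearMap.ker (B v) ≤ LinearMap.ker (B x) := by
    simpa [SetLike.le_def] using hx
  obtain ⟨c, hc⟩ : ∃ c : K, c • B v = B x := by
    simpa [Submodule.mem_span_singleton] using mem_span_of_iInf_ker_le_ker hker
  refine Submodule.mem_span_singleton.2 ⟨c, LinearMap.ker_eq_bot.1 hB.ker_eq_bot ?_⟩
  rw [map_smul, hc]

namespace IsLeviCivita

variable [NeZero (2 : K)] {L : V →ₗ[K] V →ₗ[K] V} {B : LinearMap.BilinForm K V} {D : V → V → V}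

lemma metric_compatible (hD : IsLeviCivita L B D) (hL : L.IsAlt) (hB : B.IsSymm) (x y z : V) :
    B (D x y) z = -B y (D x z) := by
  apply mul_left_cancel₀ (two_ne_zero (α := K))
  have hy := hD x y z
  have hz := hD x z y
  rw [← hL.neg y z, ← hL.neg x y] at hz
  rw [← hL.neg x z] at hy
  simp only [map_neg, LinearMap.neg_apply] at hy hz
  rw [hB.eq y (D x z)]
  linear_combination hy + hz

lemma torsion_free (hD : IsLeviCivita L B D) (hL : L.IsAlt) (hB : B.Nondegenerate) (x y : V) :
    D x y - D y x = L x y := by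
  rw [← sub_eq_zero]
  refine hB.1 _ fun z ↦ mul_left_cancel₀ (two_ne_zero (α := K)) ?_
  have hxy := hD x y z
  have hyx := hD y x z
  rw [← hL.neg x y, ← hL.neg z x, ← hL.neg y z] at hyx
  simp only [map_neg, LinearMap.neg_apply] at hyx
  simp only [map_sub, LinearMap.sub_apply]
  linear_combination hxy - hyx

lemma curvature_skew (hD : IsLeviCivita L B D) (hL : L.IsAlt) (hB : B.IsSymm) (x y z t : V) :
    B (curvature L D x y z) t = -B z (curvature L D x y t) := by
  simp only [curvature, map_sub, LinearMap.sub_apply, hD.metric_compatible hL hB]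
  ring

lemma curvature_self_orthogonal (hD : IsLeviCivita L B D) (hL : L.IsAlt) (hB : B.IsSymm)
    (x y z : V) : B (curvature L D x y z) z = 0 := by
  have hskew := hD.curvature_skew hL hB x y z z
  rw [hB.eq z] at hskew
  refine mul_left_cancel₀ (two_ne_zero (α := K)) ?_
  linear_combination hskew

variable {v : V}

lemma parallel_of_central (hD : IsLeviCivita L B D) (hL : L.IsAlt) (hB : B.Nondegenerate)
    (hcentral : ∀ x, L v x = 0) (horth : ∀ x y, B (L x y) v = 0) (x : V) : D x v = 0 := by
  refine hB.1 _ fun z ↦ mul_left_cancel₀ (two_ne_zero (α := K)) ?_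
  simp [hD x v z, ← hL.neg v x, hcentral, horth]

lemma parallel_of_mem_span (hD : IsLeviCivita L B D) (hL : L.IsAlt) (hB : B.Nondegenerate)
    (hcentral : ∀ x, L v x = 0) (horth : ∀ x y, B (L x y) v = 0) {w : V} (hw : w ∈ K ∙ v)
    (x : V) : D x w = 0 := by
  obtain ⟨c, rfl⟩ := Submodule.mem_span_singleton.1 hw
  exact hD.parallel_of_central hL hB (by simp [hcentral]) (by simp [horth]) x

lemma apply_eq_zero_of_mem_span (hD : IsLeviCivita L B D) (hL : L.IsAlt) (hB : B.Nondegenerate)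
    (hcentral : ∀ x, L v x = 0) (horth : ∀ x y, B (L x y) v = 0) {w : V} (hw : w ∈ K ∙ v)
    (x : V) : D w x = 0 := by
  have htorsion := hD.torsion_free hL hB w x
  obtain ⟨c, rfl⟩ := Submodule.mem_span_singleton.1 hw
  simpa [hD.parallel_of_mem_span hL hB hcentral horth hw, hcentral] using htorsion

lemma apply_mem_span (hD : IsLeviCivita L B D) (hBsymm : B.IsSymm) (hB : B.Nondegenerate)
    (hspan : ∀ u w, B u v = 0 → B w v = 0 → L u w ∈ K ∙ v)
    {u w : V} (hu : B u v = 0) (hw : B w v = 0) : D u w ∈ K ∙ v := by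
  have bracket_orthogonal {a b c : V} (ha : B a v = 0) (hb : B b v = 0) (hc : B c v = 0) :
      B (L a b) c = 0 := by
    obtain ⟨k, hk⟩ := Submodule.mem_span_singleton.1 (hspan a b ha hb)
    simp [← hk, hBsymm.eq v c, hc]
  refine mem_span_singleton_of_forall_orthogonal hB fun z hz ↦
    mul_left_cancel₀ (two_ne_zero (α := K)) ?_
  rw [hBsymm.eq] at hz
  rw [hD u w z, bracket_orthogonal hu hw hz, bracket_orthogonal hw hz hu,
    bracket_orthogonal hz hu hw]
  simp

lemma curvature_eq_zero_of_orthogonal (hD : IsLeviCivita L B D) (hL : L.IsAlt) (hBsymm : B.IsSymm)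
    (hB : B.Nondegenerate) (hcentral : ∀ x, L v x = 0) (horth : ∀ x y, B (L x y) v = 0)
    (hspan : ∀ u w, B u v = 0 → B w v = 0 → L u w ∈ K ∙ v)
    {u w z : V} (hu : B u v = 0) (hw : B w v = 0) (hz : B z v = 0) :
    curvature L D u w z = 0 := by
  have hparallel {y : V} (hy : y ∈ K ∙ v) (x : V) : D x y = 0 :=
    hD.parallel_of_mem_span hL hB hcentral horth hy x
  rw [curvature, hparallel (hD.apply_mem_span hBsymm hB hspan hw hz),
    hparallel (hD.apply_mem_span hBsymm hB hspan hu hz),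
    hD.apply_eq_zero_of_mem_span hL hB hcentral horth (hspan u w hu hw)]
  simp

theorem curvature_eq_zero (hD : IsLeviCivita L B D) (hL : L.IsAlt) (hBsymm : B.IsSymm)
    (hB : B.Nondegenerate) (hcentral : ∀ x, L v x = 0) (horth : ∀ x y, B (L x y) v = 0)
    (hspan : ∀ u w, B u v = 0 → B w v = 0 → L u w ∈ K ∙ v)
    {u w : V} (hu : B u v = 0) (hw : B w v = 0) (z : V) : curvature L D u w z = 0 := by
  have flat {t : V} (ht : B t v = 0) : curvature L D u w t = 0 :=
    hD.curvature_eq_zero_of_orthogonal hL hBsymm hB hcentral horth hspan hu hw ht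
  by_cases hz : B z v = 0
  · exact flat hz
  obtain ⟨c, hc⟩ := Submodule.mem_span_singleton.1 <|
    mem_span_singleton_of_forall_orthogonal hB (v := v) (x := curvature L D u w z) fun t ht ↦ by
      rw [hD.curvature_skew hL hBsymm, flat (hBsymm.eq v t ▸ ht), map_zero, neg_zero]
  have hcz : c * B v z = 0 := by
    simpa [← hc] using hD.curvature_self_orthogonal hL hBsymm u w z
  rw [hBsymm.eq] at hcz
  rw [← hc, (mul_eq_zero.1 hcz).resolve_right hz, zero_smul]

end IsLeviCivita

end LeviCivita

/-- The bracket of `T*𝔥₃` as a bundled bilinear map. -/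
def braLinear : (Fin 6 → ℝ) →ₗ[ℝ] (Fin 6 → ℝ) →ₗ[ℝ] (Fin 6 → ℝ) :=
  LinearMap.mk₂ ℝ bra
    (fun x x' y ↦ by ext i; fin_cases i <;> simp [bra] <;> ring)
    (fun c x y ↦ by ext i; fin_cases i <;> simp [bra] <;> ring)
    (fun x y y' ↦ by ext i; fin_cases i <;> simp [bra] <;> ring)
    (fun c x y ↦ by ext i; fin_cases i <;> simp [bra] <;> ring)

lemma braLinear_apply (x y : Fin 6 → ℝ) : braLinear x y = bra x y := rfl

lemma braLinear_isAlt : braLinear.IsAlt := fun x ↦ by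
  ext i; fin_cases i <;> simp [braLinear_apply, bra, mul_comm]

lemma bra_single_three (x : Fin 6 → ℝ) : bra (Pi.single 3 1) x = 0 := by
  ext i; fin_cases i <;> simp [bra]

lemma bra_mem_span_single_three {x y : Fin 6 → ℝ} (hx : x 0 = 0) (hy : y 0 = 0) :
    bra x y ∈ ℝ ∙ (Pi.single 3 1 : Fin 6 → ℝ) := by
  refine Submodule.mem_span_singleton.2 ⟨x 1 * y 2 - x 2 * y 1, ?_⟩
  ext i; fin_cases i <;> simp [bra, hx, hy]

lemma gm_eq_toBilin' (A : Matrix (Fin 6) (Fin 6) ℝ) (x y : Fin 6 → ℝ) :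
    gm A x y = A.toBilin' x y :=
  (Matrix.toBilin'_apply' A x y).symm

lemma gm_single_three {A : Matrix (Fin 6) (Fin 6) ℝ} (hA : A.IsSymm) (hrow : ∀ j ≠ 0, A 3 j = 0)
    (x : Fin 6 → ℝ) : gm A x (Pi.single 3 1) = x 0 * A 3 0 := by
  rw [gm, Matrix.mulVec_single_one, dotProduct, Finset.sum_eq_single_of_mem 0 (Finset.mem_univ 0)]
  · rw [Matrix.col_apply, hA.apply]
  · intro j _ hj
    rw [Matrix.col_apply, hA.apply, hrow j hj, mul_zero]

lemma gm_single_three_eq_zero_iff {A : Matrix (Fin 6) (Fin 6) ℝ} (hA : A.IsSymm)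
    (hdet : IsUnit A.det) (hrow : ∀ j ≠ 0, A 3 j = 0) (x : Fin 6 → ℝ) :
    gm A x (Pi.single 3 1) = 0 ↔ x 0 = 0 := by
  have h30 : A 3 0 ≠ 0 := fun h ↦ hdet.ne_zero <| Matrix.det_eq_zero_of_row_eq_zero 3 fun j ↦ by
    by_cases hj : j = 0
    · rw [hj, h]
    · exact hrow j hj
  rw [gm_single_three hA hrow, mul_eq_zero, or_iff_left h30]

theorem stmt_14_general {A : Matrix (Fin 6) (Fin 6) ℝ} (hA : A.IsSymm) (hdet : IsUnit A.det)
    (hrow : ∀ j ≠ 0, A 3 j = 0)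
    (D : (Fin 6 → ℝ) → (Fin 6 → ℝ) → (Fin 6 → ℝ))
    (hkoszul : ∀ x y z, 2 * gm A (D x y) z =
      gm A (bra x y) z - gm A (bra y z) x + gm A (bra z x) y) :
    (∀ y, D y (Pi.single 3 1) = 0) ∧
    gm A (Pi.single 3 1) (Pi.single 3 1) = 0 ∧
    (∀ u w : Fin 6 → ℝ, gm A u (Pi.single 3 1) = 0 → gm A w (Pi.single 3 1) = 0 →
      ∀ z, curv D u w z = 0) := by
  have horth_iff := gm_single_three_eq_zero_iff hA hdet hrow
  have hnull : gm A (Pi.single 3 1) (Pi.single 3 1) = 0 := (horth_iff _).2 (by simp)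
  have horth (x y) : gm A (bra x y) (Pi.single 3 1) = 0 := (horth_iff _).2 rfl
  have hspan (u w) (hu : gm A u (Pi.single 3 1) = 0) (hw : gm A w (Pi.single 3 1) = 0) :
      bra u w ∈ ℝ ∙ (Pi.single 3 1 : Fin 6 → ℝ) :=
    bra_mem_span_single_three ((horth_iff u).1 hu) ((horth_iff w).1 hw)
  simp only [gm_eq_toBilin'] at hkoszul hnull horth hspan ⊢
  have hD : IsLeviCivita braLinear A.toBilin' D := hkoszul
  have hsymm := Matrix.isSymm_toBilin'_iff_isSymm.2 hA
  have hnondeg := LinearMap.BilinForm.nondegenerate_toBilin'_of_det_ne_zero' A hdet.ne_zero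
  exact ⟨hD.parallel_of_central braLinear_isAlt hnondeg bra_single_three horth, hnull,
    fun u w hu hw ↦
      hD.curvature_eq_zero braLinear_isAlt hsymm hnondeg bra_single_three horth hspan hu hw⟩

lemma reindex_fromBlocks_Mw_three_eq_zero {E : Matrix (Fin 3) (Fin 3) ℝ} (hE : ∀ j, E 0 j = 0)
    (S : Matrix (Fin 3) (Fin 3) ℝ) :
    ∀ j ≠ 0, reindex finSumFinEquiv finSumFinEquiv (fromBlocks S Mw Mwᵀ E) 3 j = 0 := by
  intro j hj
  fin_cases j
  exacts [absurd rfl hj, rfl, rfl, hE 0, hE 1, hE 2]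

/-- The pp-wave metrics of the classification: `e₄` is a parallel null vector and the
curvature vanishes on its orthogonal complement. -/
theorem stmt_14 (ε s22 s33 : ℝ) (hε : ε = 1 ∨ ε = -1)
    (E S : Matrix (Fin 3) (Fin 3) ℝ)
    (hE : E = ε • Matrix.diagonal ![0, 1, 1] ∨ E = ε • Matrix.diagonal ![0, 1, -1])
    (hS : (S = Matrix.diagonal ![0, s22, s33] ∧ s22 * s33 ≠ 0) ∨
      (S = !![0, 0, 0; 0, s22, |s22| / 2; 0, |s22| / 2, 0] ∧ s22 ≠ 0 ∧
        (E = Matrix.diagonal ![0, 1, -1] ∨ E = -Matrix.diagonal ![0, 1, -1])))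
    (Smat : Matrix (Fin 6) (Fin 6) ℝ)
    (hSmat : Smat = Matrix.reindex finSumFinEquiv finSumFinEquiv
      (Matrix.fromBlocks S Mw Mwᵀ E))
    (hnd : IsUnit Smat.det)
    (D : (Fin 6 → ℝ) → (Fin 6 → ℝ) → (Fin 6 → ℝ))
    (hkoszul : ∀ x y z, 2 * gm Smat (D x y) z =
      gm Smat (bra x y) z - gm Smat (bra y z) x + gm Smat (bra z x) y) :
    (∀ y, D y (Pi.single 3 1) = 0) ∧
    gm Smat (Pi.single 3 1) (Pi.single 3 1) = 0 ∧
    (∀ u w : Fin 6 → ℝ, gm Smat u (Pi.single 3 1) = 0 → gm Smat w (Pi.single 3 1) = 0 →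
      ∀ z, curv D u w z = 0) := by
  obtain ⟨d, hd, rfl⟩ : ∃ d : Fin 3 → ℝ, d 0 = 0 ∧ E = ε • Matrix.diagonal d :=
    hE.elim (fun h ↦ ⟨_, rfl, h⟩) (fun h ↦ ⟨_, rfl, h⟩)
  have hSsymm : S.IsSymm := by
    obtain ⟨rfl, -⟩ | ⟨rfl, -⟩ := hS
    · exact Matrix.isSymm_diagonal _
    · exact .ext fun i j ↦ by fin_cases i <;> fin_cases j <;> rfl
  have hEsymm := (Matrix.isSymm_diagonal d).smul ε
  have hErow (j : Fin 3) : (ε • Matrix.diagonal d) 0 j = 0 := by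
    simp [Matrix.diagonal_apply, hd]
  subst hSmat
  have hsymm := (hSsymm.fromBlocks (rfl : Mwᵀ = Mwᵀ) hEsymm).reindex finSumFinEquiv
  exact stmt_14_general hsymm hnd (reindex_fromBlocks_Mw_three_eq_zero hErow S) D hkoszul
end
end
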